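/- arXiv:1305.2206 — 2 statements merged into one kernel-verified Lean document; each statement's English description precedes it below -/
import Mathlib

section
/- Let k ≥ 1. For every function u : {1,…,y−1} → ℕ, every permutation σ of {0,1,…,k}, and all natural numbers a_0,…,a_k, the number of tuples P ∈ P^k(T,B) with u_s(P) = u(s) for all 1 ≤ s ≤ y−1 and h_i(P) = a_i for all 0 ≤ i ≤ k equals the number of tuples P ∈ P^k(T,B) with u_s(P) = u(s) for all 1 ≤ s ≤ y−1 and h_i(P) = a_{σ(i)} for all 0 ≤ i ≤ k. -/
/-- A path `P` lies in `P(T,B)`: it is weakly increasing (monotone) and lies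
weakly between the boundaries `B` and `T`. -/
def InP {x y : ℕ} (T B P : Fin x → Fin (y+1)) : Prop :=
  Monotone P ∧ ∀ j, B j ≤ P j ∧ P j ≤ T j

/-- A `k`-tuple of paths lies in `P^k(T,B)`: every path lies in `P(T,B)` and
each path lies weakly above the next one. -/
def InPk {x y k : ℕ} (T B : Fin x → Fin (y+1)) (P : Fin k → Fin x → Fin (y+1)) : Prop :=
  (∀ i, InP T B (P i)) ∧
  ∀ (i : Fin k) (hi : (i : ℕ) + 1 < k) (j : Fin x), P ⟨(i : ℕ) + 1, hi⟩ j ≤ P i j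

/-- The extended tuple, with the conventions `P_0 = T` and `P_{k+1} = B`. -/
def extP {x y k : ℕ} (T B : Fin x → Fin (y+1)) (P : Fin k → Fin x → Fin (y+1))
    (i : Fin (k+2)) : Fin x → Fin (y+1) :=
  if h0 : (i : ℕ) = 0 then T
  else if hk1 : (i : ℕ) = k + 1 then B
  else P ⟨(i : ℕ) - 1, by have := i.isLt; omega⟩

/-- `hstat T B P i` is the number of east steps shared by `P_i` and `P_{i+1}`. -/
noncomputable def hstat {x y k : ℕ} (T B : Fin x → Fin (y+1))
    (P : Fin k → Fin x → Fin (y+1)) (i : Fin (k+1)) : ℕ :=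
  Nat.card {j : Fin x // extP T B P i.castSucc j = extP T B P i.succ j}

/-- `ustat T B P s` (for `s : Fin (y-1)` representing `s+1 ∈ {1,…,y-1}`) is the
number of east steps at height `y-(s+1)` lying strictly between `T` and `B`
that are used by none of the paths of `P`. -/
noncomputable def ustat {x y k : ℕ} (T B : Fin x → Fin (y+1))
    (P : Fin k → Fin x → Fin (y+1)) (s : Fin (y-1)) : ℕ :=
  Nat.card {j : Fin x // (B j : ℕ) < y - ((s : ℕ) + 1) ∧ y - ((s : ℕ) + 1) < (T j : ℕ) ∧
      ∀ i : Fin k, (P i j : ℕ) ≠ y - ((s : ℕ) + 1)}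

/-
For a single path, exchange the weight `X` of an east step on the top boundary with the weight `Y`
of one on the bottom boundary. If `G s` and `G' s` are the generating functions, before and after
the exchange, of the paths with all heights below `s`, then
`X * (G' (s + 1) - G' s) - Y * (G (s + 1) - G s) = z s * (G' (s + 1) - G (s + 1))`
above the current bottom boundary. Summed over a column, this relation telescopes, reproduces itself
for the next column and shows that the complete generating functions agree. Hence a permutation of
`P(T,B)` exchanges the two contact statistics and keeps the number of interior steps at every
height. Applied to `P_i` between its neighbours `P_{i-1}` and `P_{i+1}`, it exchanges `h_{i-1}` with
`h_i` and preserves every `u_s`; adjacent transpositions generate all permutations of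
`h_0, …, h_k`.
-/

/-- The weight of an east step at height `s` in a column with top boundary `t` and bottom
boundary `b`: `X` for a contact with the top, `Y` for a contact with the bottom, and `z s` for a
step strictly between the boundaries. -/
def stepWeight {M : Type*} [CommMonoid M] (X Y : M) (z : ℕ → M) (t b s : ℕ) : M :=
  (if s = t then X else 1) * (if s = b then Y else 1) * (if b < s ∧ s < t then z s else 1)

section StepWeight

variable {M : Type*} [CommMonoid M] {X Y : M} {z : ℕ → M} {t b : ℕ}

theorem stepWeight_of_eq : stepWeight X Y z t t t = X * Y := by
  simp [stepWeight]

theorem stepWeight_top (hb : b < t) : stepWeight X Y z t b t = X := by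
  simp [stepWeight, hb.ne']

theorem stepWeight_bottom (hb : b < t) : stepWeight X Y z t b b = Y := by
  simp [stepWeight, hb.ne]

theorem stepWeight_interior {s : ℕ} (hb : b < s) (ht : s < t) :
    stepWeight X Y z t b s = z s := by
  simp [stepWeight, hb, ht, hb.ne', ht.ne]

theorem map_stepWeight {N F : Type*} [CommMonoid N] [FunLike F M N] [MonoidHomClass F M N]
    (φ : F) (s : ℕ) :
    φ (stepWeight X Y z t b s) = stepWeight (φ X) (φ Y) (fun r => φ (z r)) t b s := by
  simp only [stepWeight, map_mul, apply_ite φ, map_one]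

end StepWeight

section ColumnSum

variable {R : Type*} [CommSemiring R]

/-- If `G s` is the generating function of the paths with all heights below `s`, then
`columnSum t b w G` is that of the paths extended by one more column with boundaries `t` and `b`
and step weights `w`. -/
def columnSum (t b : ℕ) (w G : ℕ → R) (s : ℕ) : R :=
  ∑ r ∈ Finset.Icc b t with r < s, w r * G (r + 1)

theorem columnSum_of_le {t b s : ℕ} (w G : ℕ → R) (hs : s ≤ b) : columnSum t b w G s = 0 := by
  refine Finset.sum_eq_zero fun r hr => ?_
  simp only [Finset.mem_filter, Finset.mem_Icc] at hr
  omega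

theorem columnSum_succ {t b s : ℕ} (w G : ℕ → R) (hb : b ≤ s) (ht : s ≤ t) :
    columnSum t b w G (s + 1) = columnSum t b w G s + w s * G (s + 1) := by
  have hfilter : {r ∈ Finset.Icc b t | r < s + 1} = insert s {r ∈ Finset.Icc b t | r < s} := by
    ext r
    simp only [Finset.mem_filter, Finset.mem_Icc, Finset.mem_insert]
    omega
  rw [columnSum, hfilter, Finset.sum_insert (by simp), add_comm, columnSum]

theorem columnSum_succ_of_lt {t b s : ℕ} (w G : ℕ → R) (ht : t < s) :
    columnSum t b w G (s + 1) = columnSum t b w G s := by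
  refine Finset.sum_congr (Finset.filter_congr fun r hr => ?_) fun _ _ => rfl
  rw [Finset.mem_Icc] at hr
  omega

end ColumnSum

/-- The relation between the generating function `G` of truncated paths below `t` and above `b`,
and the generating function `G'` obtained from it by exchanging the contact weights `X` and `Y`.
The second condition is what makes the relation pass from one column to the next. -/
structure ContactSwap {R : Type*} [CommRing R] (X Y : R) (z : ℕ → R) (t b : ℕ) (G G' : ℕ → R) :
    Prop where
  eq_of_lt : ∀ s, t < s → G' s = G s
  step : ∀ s, b < s →
    X * (G' (s + 1) - G' s) - Y * (G (s + 1) - G s) = z s * (G' (s + 1) - G (s + 1))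

namespace ContactSwap

variable {R : Type*} [CommRing R] {X Y : R} {z : ℕ → R} {t b : ℕ} {G G' : ℕ → R}

theorem mono (h : ContactSwap X Y z t b G G') {t' b' : ℕ} (ht : t ≤ t') (hb : b ≤ b') :
    ContactSwap X Y z t' b' G G' :=
  ⟨fun s hs => h.eq_of_lt s (ht.trans_lt hs), fun s hs => h.step s (hb.trans_lt hs)⟩

theorem columnSum_sub_columnSum (h : ContactSwap X Y z t b G G') {s : ℕ} (hb : b < s)
    (ht : s ≤ t) :
    columnSum t b (stepWeight Y X z t b) G' s - columnSum t b (stepWeight X Y z t b) G s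
      = X * G' s - Y * G s := by
  induction s, hb using Nat.le_induction with
  | base =>
    have hbt : b < t := ht
    simp only [columnSum_succ _ _ le_rfl hbt.le, columnSum_of_le _ _ le_rfl,
      stepWeight_bottom hbt, zero_add]
  | succ s hbs ih =>
    have hb : b < s := hbs
    have hs : s < t := ht
    rw [columnSum_succ _ _ hb.le hs.le, columnSum_succ _ _ hb.le hs.le,
      stepWeight_interior hb hs, stepWeight_interior hb hs]
    linear_combination ih hs.le - h.step s hb

theorem columnSum_eq_of_lt (h : ContactSwap X Y z t b G G') (hbt : b ≤ t) {s : ℕ} (hs : t < s) :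
    columnSum t b (stepWeight Y X z t b) G' s = columnSum t b (stepWeight X Y z t b) G s := by
  induction s, hs using Nat.le_induction with
  | base =>
    have hG : G' (t + 1) = G (t + 1) := h.eq_of_lt _ t.lt_succ_self
    rw [columnSum_succ _ _ hbt le_rfl, columnSum_succ _ _ hbt le_rfl]
    obtain rfl | hbt := hbt.eq_or_lt
    · rw [columnSum_of_le _ _ le_rfl, columnSum_of_le _ _ le_rfl, stepWeight_of_eq,
        stepWeight_of_eq, hG, mul_comm Y X]
    · rw [stepWeight_top hbt, stepWeight_top hbt]
      linear_combination h.columnSum_sub_columnSum hbt le_rfl - h.step t hbt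
        + (X + Y - z t) * hG
  | succ s hs ih => rw [columnSum_succ_of_lt _ _ hs, columnSum_succ_of_lt _ _ hs, ih]

theorem columnSum (h : ContactSwap X Y z t b G G') (hbt : b ≤ t) :
    ContactSwap X Y z t b (columnSum t b (stepWeight X Y z t b) G)
      (columnSum t b (stepWeight Y X z t b) G') where
  eq_of_lt _ := h.columnSum_eq_of_lt hbt
  step s hb := by
    obtain hs | rfl | hs := lt_trichotomy s t
    · have hdiff := h.columnSum_sub_columnSum (Nat.lt_succ_of_lt hb) hs
      rw [hdiff, columnSum_succ _ _ hb.le hs.le, columnSum_succ _ _ hb.le hs.le,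
        stepWeight_interior hb hs, stepWeight_interior hb hs]
      ring
    · have hG : G' (s + 1) = G (s + 1) := h.eq_of_lt _ s.lt_succ_self
      have hcol := h.columnSum_eq_of_lt hbt s.lt_succ_self
      have hsucc := columnSum_succ (stepWeight X Y z s b) G hb.le le_rfl
      have hsucc' := columnSum_succ (stepWeight Y X z s b) G' hb.le le_rfl
      rw [stepWeight_top hb] at hsucc hsucc'
      linear_combination X * hsucc' - Y * hsucc + X * Y * hG - z s * hcol
    · rw [columnSum_succ_of_lt _ _ hs, columnSum_succ_of_lt _ _ hs,
        h.columnSum_eq_of_lt hbt hs]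
      ring

end ContactSwap

theorem inP_snoc_iff {x y : ℕ} {T B : Fin (x + 1) → Fin (y + 1)} {h : Fin x → Fin (y + 1)}
    {r : Fin (y + 1)} :
    InP T B (Fin.snoc h r : Fin (x + 1) → Fin (y + 1)) ↔
      InP (Fin.init T) (Fin.init B) h ∧ (∀ j, h j ≤ r) ∧
        r ∈ Finset.Icc (B (Fin.last x)) (T (Fin.last x)) := by
  have hmono : Monotone (Fin.snoc h r : Fin (x + 1) → Fin (y + 1)) ↔
      Monotone h ∧ ∀ j, h j ≤ r := by
    refine ⟨fun hm => ⟨fun i j hij => ?_, fun j => ?_⟩, fun ⟨hm, hr⟩ i j hij => ?_⟩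
    · simpa using hm (Fin.castSucc_le_castSucc_iff.2 hij)
    · simpa using hm j.castSucc.le_last
    · induction j using Fin.lastCases with
      | last => induction i using Fin.lastCases <;> simp [hr]
      | cast j =>
        induction i using Fin.lastCases with
        | last => exact absurd hij (Fin.castSucc_lt_last j).not_ge
        | cast i => simpa using hm (Fin.castSucc_le_castSucc_iff.1 hij)
  simp only [InP, hmono, Fin.forall_fin_succ', Fin.snoc_castSucc, Fin.snoc_last, Fin.init,
    Finset.mem_Icc]
  tauto

section PathSum

variable {R : Type*} {x y : ℕ}

open scoped Classical in
/-- The generating function of the paths of `P(T,B)` all of whose heights are less than `s`, where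
an east step at height `r` in column `j` has weight `w j r`. -/
noncomputable def pathSum [CommSemiring R] (T B : Fin x → Fin (y + 1)) (w : Fin x → ℕ → R)
    (s : ℕ) : R :=
  ∑ h with InP T B h ∧ ∀ j, (h j : ℕ) < s, ∏ j, w j (h j)

theorem pathSum_zero [CommSemiring R] (T B : Fin 0 → Fin (y + 1)) (w : Fin 0 → ℕ → R) (s : ℕ) :
    pathSum T B w s = 1 := by
  simp [pathSum, InP, Subsingleton.monotone]

theorem pathSum_succ [CommSemiring R] (T B : Fin (x + 1) → Fin (y + 1))
    (w : Fin (x + 1) → ℕ → R) :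
    pathSum T B w = columnSum (T (Fin.last x)) (B (Fin.last x)) (w (Fin.last x))
      (pathSum (Fin.init T) (Fin.init B) (Fin.init w)) := by
  classical
  funext s
  rw [columnSum, ← Fin.map_valEmbedding_Icc, Finset.filter_map, Finset.sum_map]
  simp only [pathSum, Finset.mul_sum, Finset.sum_sigma']
  have hmem (h : Fin x → Fin (y + 1)) (r : Fin (y + 1)) :
      (InP T B (Fin.snoc h r : Fin (x + 1) → Fin (y + 1)) ∧
        ∀ j, ((Fin.snoc h r : Fin (x + 1) → Fin (y + 1)) j : ℕ) < s) ↔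
      (r ∈ Finset.Icc (B (Fin.last x)) (T (Fin.last x)) ∧ (r : ℕ) < s) ∧
        InP (Fin.init T) (Fin.init B) h ∧ ∀ j, (h j : ℕ) < r + 1 := by
    simp only [inP_snoc_iff, Fin.forall_fin_succ', Fin.snoc_castSucc, Fin.snoc_last,
      Fin.le_def, Nat.lt_succ_iff]
    exact ⟨fun hh => ⟨⟨hh.1.2.2, hh.2.2⟩, hh.1.1, hh.1.2.1⟩,
      fun hh => ⟨⟨hh.2.1, hh.2.2, hh.1.1⟩, fun j => (hh.2.2 j).trans_lt hh.1.2, hh.1.2⟩⟩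
  refine Finset.sum_nbij' (fun h => ⟨h (Fin.last x), Fin.init h⟩) (fun p => Fin.snoc p.2 p.1)
    (fun h hh => ?_) (fun p hp => ?_) (fun h _ => Fin.snoc_init_self h) (fun p _ => by simp)
    (fun h _ => ?_)
  · have := hmem (Fin.init h) (h (Fin.last x))
    rw [Fin.snoc_init_self] at this
    simpa [-Finset.mem_Icc] using this.1 (by simpa using hh)
  · simpa using (hmem p.2 p.1).2 (by simpa [-Finset.mem_Icc] using hp)
  · rw [Fin.prod_univ_castSucc, mul_comm]
    rfl

theorem contactSwap_pathSum [CommRing R] (X Y : R) (z : ℕ → R) {T B : Fin x → Fin (y + 1)}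
    (hT : Monotone T) (hB : Monotone B) (hBT : B ≤ T) {t b : ℕ} (ht : ∀ j, (T j : ℕ) ≤ t)
    (hb : ∀ j, (B j : ℕ) ≤ b) :
    ContactSwap X Y z t b (pathSum T B fun j => stepWeight X Y z (T j) (B j))
      (pathSum T B fun j => stepWeight Y X z (T j) (B j)) := by
  induction x generalizing t b with
  | zero => constructor <;> simp [pathSum_zero]
  | succ x ih =>
    have hinit : ContactSwap X Y z (T (Fin.last x)) (B (Fin.last x)) _ _ :=
      ih (T := Fin.init T) (B := Fin.init B) (hT.comp Fin.strictMono_castSucc.monotone)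
        (hB.comp Fin.strictMono_castSucc.monotone) (fun j => hBT j.castSucc)
        (fun j => hT j.castSucc.le_last) (fun j => hB j.castSucc.le_last)
    rw [pathSum_succ, pathSum_succ]
    exact (hinit.columnSum (hBT (Fin.last x))).mono (ht _) (hb _)

open scoped Classical in
theorem sum_prod_stepWeight_comm [CommRing R] (X Y : R) (z : ℕ → R) {T B : Fin x → Fin (y + 1)}
    (hT : Monotone T) (hB : Monotone B) (hBT : B ≤ T) :
    ∑ h with InP T B h, ∏ j, stepWeight Y X z (T j) (B j) (h j) =
      ∑ h with InP T B h, ∏ j, stepWeight X Y z (T j) (B j) (h j) := by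
  have hswap := contactSwap_pathSum X Y z hT hB hBT (fun j => (T j).is_le) (fun j => (B j).is_le)
  simpa only [pathSum, Fin.is_lt, implies_true, and_true] using
    hswap.eq_of_lt (y + 1) y.lt_succ_self

end PathSum


section Permutation

theorem exists_perm_comp_eq_of_card_fiber_eq {ι M : Type*} [Finite ι] {f g : ι → M}
    (hcard : ∀ m, Nat.card {i // f i = m} = Nat.card {i // g i = m}) :
    ∃ e : Equiv.Perm ι, ∀ i, g (e i) = f i :=
  ⟨Equiv.ofFiberEquiv fun m => (Finite.card_eq.1 (hcard m)).some, Equiv.ofFiberEquiv_map _⟩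

theorem exists_perm_comp_eq_of_sum_of_eq {ι M : Type*} [Fintype ι] [MulOneClass M] {f g : ι → M}
    (hsum : ∑ i, MonoidAlgebra.of ℤ M (f i) = ∑ i, MonoidAlgebra.of ℤ M (g i)) :
    ∃ e : Equiv.Perm ι, ∀ i, g (e i) = f i := by
  classical
  refine exists_perm_comp_eq_of_card_fiber_eq fun m => ?_
  have hcoeff (f : ι → M) :
      (∑ i, MonoidAlgebra.of ℤ M (f i)).coeff m = Nat.card {i // f i = m} := by
    simp [MonoidAlgebra.of_apply, Finsupp.finsetSum_apply, Finsupp.single_apply,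
      Fintype.card_subtype]
  exact_mod_cast (hcoeff f).symm.trans ((congrArg (fun p => p.coeff m) hsum).trans (hcoeff g))

theorem exists_perm_prod_stepWeight_swap {M : Type*} [CommMonoid M] (X Y : M) (z : ℕ → M)
    {x y : ℕ} {T B : Fin x → Fin (y + 1)} (hT : Monotone T) (hB : Monotone B) (hBT : B ≤ T) :
    ∃ φ : Equiv.Perm {h // InP T B h}, ∀ h : {h // InP T B h},
      ∏ j, stepWeight X Y z (T j) (B j) (φ h |>.1 j) =
        ∏ j, stepWeight Y X z (T j) (B j) (h.1 j) := by
  classical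
  refine exists_perm_comp_eq_of_sum_of_eq
    (f := fun h : {h // InP T B h} => ∏ j, stepWeight Y X z (T j) (B j) (h.1 j))
    (g := fun h : {h // InP T B h} => ∏ j, stepWeight X Y z (T j) (B j) (h.1 j)) ?_
  simp only [map_prod, map_stepWeight]
  have hsum := sum_prod_stepWeight_comm (MonoidAlgebra.of ℤ M X) (MonoidAlgebra.of ℤ M Y)
    (fun r => MonoidAlgebra.of ℤ M (z r)) hT hB hBT
  rwa [Finset.sum_subtype (p := InP T B) _ (by simp),
    Finset.sum_subtype (p := InP T B) _ (by simp)] at hsum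

end Permutation

section Contacts

variable {x y : ℕ}

/-- The number of east steps shared by the paths `P` and `Q`. -/
noncomputable def sharedSteps (P Q : Fin x → Fin (y + 1)) : ℕ :=
  Nat.card {j // P j = Q j}

/-- The number of east steps of the path `P` at height `s` lying strictly between the boundaries
`T` and `B`. -/
noncomputable def interiorSteps (T B P : Fin x → Fin (y + 1)) (s : Fin (y + 1)) : ℕ :=
  Nat.card {j // B j < s ∧ s < T j ∧ P j = s}

theorem prod_stepWeight {M : Type*} [CommMonoid M] (X Y : M) (z : ℕ → M)
    (T B P : Fin x → Fin (y + 1)) :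
    ∏ j, stepWeight X Y z (T j) (B j) (P j) =
      X ^ sharedSteps T P * Y ^ sharedSteps P B *
        ∏ s : Fin (y + 1), z s ^ interiorSteps T B P s := by
  have hinterior : ∏ j, (if B j < P j ∧ P j < T j then z (P j) else 1) =
      ∏ s : Fin (y + 1), z s ^ interiorSteps T B P s := by
    rw [← Finset.prod_fiberwise Finset.univ P]
    refine Finset.prod_congr rfl fun s _ => ?_
    rw [interiorSteps, Nat.card_eq_fintype_card, Fintype.card_subtype, ← Finset.prod_const,
      ← Finset.prod_filter, Finset.filter_filter]
    refine Finset.prod_congr (Finset.filter_congr fun j _ => ?_) fun j hj => ?_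
    · grind only
    · rw [(Finset.mem_filter.1 hj).2.2.2]
  simp only [stepWeight, Finset.prod_mul_distrib, Fin.val_inj, Fin.val_fin_lt, hinterior,
    sharedSteps, Nat.card_eq_fintype_card, Fintype.card_subtype, ← Finset.prod_const,
    Finset.prod_filter, eq_comm]

theorem monomial_eq_ofAdd {ι : Type*} [Fintype ι] [DecidableEq ι] (a b : ℕ) (c : ι → ℕ) :
    Multiplicative.ofAdd ((1, 0, 0) : ℕ × ℕ × (ι → ℕ)) ^ a * Multiplicative.ofAdd (0, 1, 0) ^ b *
      ∏ s, Multiplicative.ofAdd (0, 0, Pi.single s 1) ^ c s = Multiplicative.ofAdd (a, b, c) := by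
  refine Multiplicative.toAdd.injective ?_
  ext s <;> simp [Prod.fst_sum, Prod.snd_sum, Pi.single_apply]

theorem exists_perm_sharedSteps_swap {T B : Fin x → Fin (y + 1)} (hT : Monotone T)
    (hB : Monotone B) :
    ∃ φ : Equiv.Perm (Fin x → Fin (y + 1)), ∀ P, InP T B P →
      InP T B (φ P) ∧ sharedSteps T (φ P) = sharedSteps P B ∧
        sharedSteps (φ P) B = sharedSteps T P ∧ interiorSteps T B (φ P) = interiorSteps T B P := by
  classical
  by_cases hBT : B ≤ T
  · obtain ⟨φ, hφ⟩ := exists_perm_prod_stepWeight_swap (Multiplicative.ofAdd (1, 0, 0))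
      (Multiplicative.ofAdd (0, 1, 0)) (fun s => Multiplicative.ofAdd
        ((0, 0, Pi.single (Fin.ofNat (y + 1) s) 1) : ℕ × ℕ × (Fin (y + 1) → ℕ))) hT hB hBT
    refine ⟨Equiv.Perm.ofSubtype φ, fun P hP => ?_⟩
    rw [Equiv.Perm.ofSubtype_apply_of_mem φ hP]
    have hexp := hφ ⟨P, hP⟩
    simp only [prod_stepWeight, mul_comm (_ ^ sharedSteps T P), Fin.ofNat_val_eq_self,
      monomial_eq_ofAdd, Multiplicative.ofAdd.injective.eq_iff, Prod.mk.injEq] at hexp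
    exact ⟨(φ ⟨P, hP⟩).2, hexp⟩
  · exact ⟨1, fun P hP => absurd (fun j => (hP.2 j).1.trans (hP.2 j).2) hBT⟩

end Contacts

theorem antitone_update_castSucc_succ {α : Type*} [Preorder α] {k : ℕ} {c : Fin (k + 2) → α}
    (hc : Antitone c) {i : Fin k} {a : α} (hle : c i.succ.succ ≤ a)
    (hge : a ≤ c i.castSucc.castSucc) : Antitone (Function.update c i.castSucc.succ a) := by
  refine Fin.antitone_iff_succ_le.2 fun m => ?_
  have hcm : c m.succ ≤ c m.castSucc := hc m.castSucc_lt_succ.le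
  by_cases hsucc : m = i.castSucc
  · subst hsucc
    simpa [Fin.ext_iff] using hge
  · by_cases hcast : m = i.succ
    · subst hcast
      simpa [Fin.ext_iff] using hle
    · rwa [Function.update_of_ne (by simpa using hsucc),
        Function.update_of_ne (by simpa [Fin.ext_iff] using hcast)]

theorem forall_ne_iff_lt_and_lt_of_antitone {α : Type*} [PartialOrder α] {k : ℕ}
    {c : Fin (k + 2) → α} (hc : Antitone c) (i : Fin k) :
    (∀ m ≠ i.castSucc.succ, c m ≠ c i.castSucc.succ) ↔
      c i.succ.succ < c i.castSucc.succ ∧ c i.castSucc.succ < c i.castSucc.castSucc := by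
  refine ⟨fun hne => ⟨?_, ?_⟩, fun ⟨hlt, hgt⟩ m hm => ?_⟩
  · exact (hc (Fin.castSucc_lt_succ (i := i.succ)).le).lt_of_ne (hne _ (by simp [Fin.ext_iff]))
  · exact (hc (Fin.castSucc_lt_succ (i := i.castSucc)).le).lt_of_ne
      (hne _ (by simp [Fin.ext_iff])).symm
  · obtain hm | hm := hm.lt_or_gt
    · exact (hgt.trans_le (hc (by grind [Fin.le_def, Fin.lt_def]))).ne'
    · exact ((hc (by grind [Fin.le_def, Fin.lt_def])).trans_lt hlt).ne

theorem injective_update_perm {ι α : Type*} [DecidableEq ι] (i : ι)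
    {F : (ι → α) → Equiv.Perm α} (hF : ∀ P a, F (Function.update P i a) = F P) :
    Function.Injective fun P => Function.update P i (F P (P i)) := by
  intro P Q hPQ
  have hFPQ : F P = F Q := by
    simpa only [hF] using congrArg F hPQ
  funext m
  obtain rfl | hm := eq_or_ne m i
  · simpa [hFPQ] using congrFun hPQ m
  · simpa [hm] using congrFun hPQ m

section Tuples

variable {x y k : ℕ} {T B : Fin x → Fin (y + 1)} {P : Fin k → Fin x → Fin (y + 1)}

theorem extP_eq_cons_snoc (T B : Fin x → Fin (y + 1)) (P : Fin k → Fin x → Fin (y + 1)) :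
    extP T B P = Fin.cons T (Fin.snoc (α := fun _ => Fin x → Fin (y + 1)) P B) := by
  funext i
  induction i using Fin.cases with
  | zero => rfl
  | succ i =>
    induction i using Fin.lastCases with
    | last => simp [extP]
    | cast i => simp [extP, i.is_lt.ne]

theorem extP_castSucc_succ (T B : Fin x → Fin (y + 1)) (P : Fin k → Fin x → Fin (y + 1))
    (i : Fin k) : extP T B P i.castSucc.succ = P i := by
  simp [extP_eq_cons_snoc]

theorem extP_last (T B : Fin x → Fin (y + 1)) (P : Fin k → Fin x → Fin (y + 1)) :
    extP T B P (Fin.last (k + 1)) = B := by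
  simp [extP_eq_cons_snoc, ← Fin.succ_last]

theorem extP_update (T B : Fin x → Fin (y + 1)) (P : Fin k → Fin x → Fin (y + 1)) (i : Fin k)
    (h : Fin x → Fin (y + 1)) :
    extP T B (Function.update P i h) = Function.update (extP T B P) i.castSucc.succ h := by
  simp only [extP_eq_cons_snoc, Fin.cons_update, Fin.snoc_update]

theorem monotone_extP (hT : Monotone T) (hB : Monotone B) (hP : ∀ i, Monotone (P i))
    (m : Fin (k + 2)) : Monotone (extP T B P m) := by
  rw [extP_eq_cons_snoc]
  induction m using Fin.cases with
  | zero => simpa using hT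
  | succ m => induction m using Fin.lastCases <;> simp [hB, hP]

theorem inPk_iff (hBT : B ≤ T) :
    InPk T B P ↔ (∀ i, Monotone (P i)) ∧ Antitone (extP T B P) := by
  have hext (m : Fin k) : extP T B P m.castSucc.succ = P m := extP_castSucc_succ T B P m
  refine ⟨fun h => ⟨fun i => (h.1 i).1, Fin.antitone_iff_succ_le.2 fun m => ?_⟩,
    fun ⟨hmono, hanti⟩ => ⟨fun i => ⟨hmono i, fun j => ⟨?_, ?_⟩⟩, fun i hi j => ?_⟩⟩
  · induction m using Fin.lastCases with
    | last =>
      rw [Fin.succ_last, extP_last]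
      intro j
      obtain _ | k := k
      · exact hBT j
      · exact (hext (Fin.last k) ▸ (h.1 (Fin.last k)).2 j).1
    | cast m =>
      rw [hext]
      obtain ⟨_ | n, hn⟩ := m
      · exact fun j => ((h.1 ⟨0, hn⟩).2 j).2
      · exact (hext ⟨n, by omega⟩).symm ▸ h.2 ⟨n, by omega⟩ hn
  · have := hanti i.castSucc.succ.le_last j
    rwa [extP_last, hext] at this
  · exact hext i ▸ hanti i.castSucc.succ.zero_le j
  · have := hanti (a := i.castSucc.succ) (b := (⟨i + 1, hi⟩ : Fin k).castSucc.succ)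
      (by simp [Fin.le_def]) j
    rwa [hext, hext] at this

theorem InPk.inP (hBT : B ≤ T) (h : InPk T B P) (i : Fin k) :
    InP (extP T B P i.castSucc.castSucc) (extP T B P i.succ.succ) (P i) := by
  have hanti := ((inPk_iff hBT).1 h).2
  rw [← extP_castSucc_succ T B P i]
  exact ⟨(extP_castSucc_succ T B P i).symm ▸ (h.1 i).1, fun j =>
    ⟨hanti (Fin.castSucc_lt_succ (i := i.succ)).le j,
      hanti (Fin.castSucc_lt_succ (i := i.castSucc)).le j⟩⟩

theorem InPk.update (hBT : B ≤ T) (h : InPk T B P) {i : Fin k} {Q : Fin x → Fin (y + 1)}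
    (hQ : InP (extP T B P i.castSucc.castSucc) (extP T B P i.succ.succ) Q) :
    InPk T B (Function.update P i Q) := by
  rw [inPk_iff hBT] at h ⊢
  rw [extP_update]
  refine ⟨(Function.forall_update_iff P fun _ => Monotone).2 ⟨hQ.1, fun m _ => h.1 m⟩, ?_⟩
  exact antitone_update_castSucc_succ h.2 (fun j => (hQ.2 j).1) fun j => (hQ.2 j).2

theorem hstat_update {i : Fin k} {Q : Fin x → Fin (y + 1)}
    (htop : sharedSteps (extP T B P i.castSucc.castSucc) Q =
      sharedSteps (P i) (extP T B P i.succ.succ))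
    (hbot : sharedSteps Q (extP T B P i.succ.succ) =
      sharedSteps (extP T B P i.castSucc.castSucc) (P i)) (m : Fin (k + 1)) :
    hstat T B (Function.update P i Q) m = hstat T B P (Equiv.swap i.castSucc i.succ m) := by
  have hstat_eq (P : Fin k → Fin x → Fin (y + 1)) (m : Fin (k + 1)) :
      hstat T B P m = sharedSteps (extP T B P m.castSucc) (extP T B P m.succ) := rfl
  rw [hstat_eq, hstat_eq, extP_update]
  by_cases hcast : m = i.castSucc
  · subst hcast
    rw [Equiv.swap_apply_left, Function.update_self, Function.update_of_ne (by simp [Fin.ext_iff]),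
      htop, ← extP_castSucc_succ T B P i]
    rfl
  by_cases hsucc : m = i.succ
  · subst hsucc
    rw [Equiv.swap_apply_right, extP_castSucc_succ, ← hbot, Fin.castSucc_succ,
      Function.update_self, Function.update_of_ne (by simp [Fin.ext_iff])]
  · rw [Equiv.swap_apply_of_ne_of_ne hcast hsucc,
      Function.update_of_ne (by simpa [Fin.ext_iff] using hsucc),
      Function.update_of_ne (by simpa using hcast)]

theorem extP_lt_and_lt_extP_iff (hBT : B ≤ T) (h : InPk T B P) (i : Fin k) (j : Fin x) :
    (extP T B P i.succ.succ j < P i j ∧ P i j < extP T B P i.castSucc.castSucc j) ↔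
      B j < P i j ∧ P i j < T j ∧ ∀ m ≠ i, P m j ≠ P i j := by
  have hanti : Antitone fun m => extP T B P m j := fun m n hmn => ((inPk_iff hBT).1 h).2 hmn j
  have hiff := forall_ne_iff_lt_and_lt_of_antitone hanti i
  rw [extP_castSucc_succ] at hiff
  rw [← hiff, extP_eq_cons_snoc, Fin.forall_fin_succ, Fin.forall_fin_succ', lt_iff_le_and_ne,
    lt_iff_le_and_ne]
  have hbounds := (h.1 i).2 j
  have hzero : 0 ≠ i.castSucc.succ := by simp [Fin.ext_iff]
  have hlast : Fin.last k ≠ i.castSucc := i.castSucc_lt_last.ne'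
  simp only [Fin.cons_zero, Fin.cons_succ, Fin.snoc_castSucc, Fin.snoc_last, Fin.succ_inj,
    Fin.castSucc_inj, ne_eq]
  tauto

theorem ustat_add_interiorSteps (hBT : B ≤ T) (h : InPk T B P) (i : Fin k) (s : Fin (y - 1)) :
    ustat T B P s + interiorSteps (extP T B P i.castSucc.castSucc) (extP T B P i.succ.succ) (P i)
        ⟨y - (s + 1), by omega⟩ =
      Nat.card {j // (B j : ℕ) < y - ((s : ℕ) + 1) ∧ y - ((s : ℕ) + 1) < T j ∧
        ∀ m ≠ i, (P m j : ℕ) ≠ y - ((s : ℕ) + 1)} := by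
  classical
  simp only [ustat, interiorSteps, Nat.card_eq_fintype_card, Fintype.card_subtype]
  rw [← Finset.card_filter_add_card_filter_not (s := {j | _ ∧ _ ∧ ∀ m ≠ i, _})
    fun j => (P i j : ℕ) ≠ y - ((s : ℕ) + 1), Finset.filter_filter, Finset.filter_filter]
  congr 2 <;> refine Finset.filter_congr fun j _ => ?_
  · grind
  · have := extP_lt_and_lt_extP_iff hBT h i j
    grind

theorem ustat_update (hBT : B ≤ T) (h : InPk T B P) {i : Fin k} {Q : Fin x → Fin (y + 1)}
    (hQ : InP (extP T B P i.castSucc.castSucc) (extP T B P i.succ.succ) Q)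
    (hinterior : interiorSteps (extP T B P i.castSucc.castSucc) (extP T B P i.succ.succ) Q =
      interiorSteps (extP T B P i.castSucc.castSucc) (extP T B P i.succ.succ) (P i))
    (s : Fin (y - 1)) : ustat T B (Function.update P i Q) s = ustat T B P s := by
  have hP := ustat_add_interiorSteps hBT h i s
  have hPQ := ustat_add_interiorSteps hBT (h.update hBT hQ) i s
  have hneighbours : extP T B (Function.update P i Q) i.castSucc.castSucc =
      extP T B P i.castSucc.castSucc ∧
      extP T B (Function.update P i Q) i.succ.succ = extP T B P i.succ.succ := by
    simp [extP_update, Fin.ext_iff]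
  rw [hneighbours.1, hneighbours.2, Function.update_self, hinterior] at hPQ
  refine Nat.add_right_cancel (hPQ.trans (Eq.trans ?_ hP.symm))
  simp +contextual only [Function.update_of_ne, ne_eq, not_false_eq_true]

theorem exists_perm_hstat_swap (hT : Monotone T) (hB : Monotone B) (hBT : B ≤ T) (i : Fin k) :
    ∃ Ψ : Equiv.Perm {P : Fin k → Fin x → Fin (y + 1) // InPk T B P}, ∀ P,
      ustat T B (Ψ P).1 = ustat T B P.1 ∧
        ∀ m, hstat T B (Ψ P).1 m = hstat T B P.1 (Equiv.swap i.castSucc i.succ m) := by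
  choose! φ hφ using fun (U L : Fin x → Fin (y + 1)) (hU : Monotone U) (hL : Monotone L) =>
    exists_perm_sharedSteps_swap hU hL
  let F (P : Fin k → Fin x → Fin (y + 1)) : Equiv.Perm (Fin x → Fin (y + 1)) :=
    φ (extP T B P i.castSucc.castSucc) (extP T B P i.succ.succ)
  have hF (P) (Q : Fin x → Fin (y + 1)) : F (Function.update P i Q) = F P := by
    simp [F, extP_update, Fin.ext_iff]
  have hspec (P) (hP : InPk T B P) :=
    have hmono := monotone_extP hT hB ((inPk_iff hBT).1 hP).1
    hφ _ _ (hmono i.castSucc.castSucc) (hmono i.succ.succ) (P i) (hP.inP hBT i)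
  have hinj := Subtype.map_injective (fun P (hP : InPk T B P) => hP.update hBT (hspec P hP).1)
    (injective_update_perm i hF)
  refine ⟨Equiv.ofBijective _ (Finite.injective_iff_bijective.1 hinj), fun P => ?_⟩
  obtain ⟨hInP, htop, hbot, hinterior⟩ := hspec P.1 P.2
  exact ⟨funext (ustat_update hBT P.2 hInP hinterior), hstat_update htop hbot⟩

theorem exists_perm_hstat_perm (hT : Monotone T) (hB : Monotone B) (hBT : B ≤ T)
    (σ : Equiv.Perm (Fin (k + 1))) :
    ∃ Ψ : Equiv.Perm {P : Fin k → Fin x → Fin (y + 1) // InPk T B P}, ∀ P,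
      ustat T B (Ψ P).1 = ustat T B P.1 ∧ ∀ m, hstat T B (Ψ P).1 m = hstat T B P.1 (σ m) := by
  have hσ := (Submonoid.eq_top_iff' _).1 (Equiv.Perm.mclosure_swap_castSucc_succ k) σ
  induction hσ using Submonoid.closure_induction with
  | mem σ hσ =>
    obtain ⟨i, rfl⟩ := hσ
    exact exists_perm_hstat_swap hT hB hBT i
  | one => exact ⟨1, fun P => ⟨rfl, fun m => rfl⟩⟩
  | mul σ τ _ _ ihσ ihτ =>
    obtain ⟨Ψ, hΨ⟩ := ihσ
    obtain ⟨Φ, hΦ⟩ := ihτ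
    refine ⟨Φ * Ψ, fun P => ⟨(hΦ (Ψ P)).1.trans (hΨ P).1, fun m => ?_⟩⟩
    exact ((hΦ (Ψ P)).2 m).trans ((hΨ P).2 (τ m))

end Tuples

/-- For any fixed values of the `u_s` statistics, the joint distribution of
`(h_0, …, h_k)` over `P^k(T,B,u)` is symmetric. -/
theorem stmt5 {x y : ℕ} (k : ℕ) (hk : 1 ≤ k) (T B : Fin x → Fin (y+1))
    (hT : Monotone T) (hB : Monotone B) (hTB : ∀ j, B j ≤ T j)
    (u : Fin (y-1) → ℕ) (σ : Equiv.Perm (Fin (k+1))) (a : Fin (k+1) → ℕ) :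
    Nat.card {P : Fin k → Fin x → Fin (y+1) //
        InPk T B P ∧ (∀ s, ustat T B P s = u s) ∧ ∀ i, hstat T B P i = a i}
    = Nat.card {P : Fin k → Fin x → Fin (y+1) //
        InPk T B P ∧ (∀ s, ustat T B P s = u s) ∧ ∀ i, hstat T B P i = a (σ i)} := by
  obtain ⟨Ψ, hΨ⟩ := exists_perm_hstat_perm hT hB hTB σ
  let stats (P : Fin k → Fin x → Fin (y + 1)) (b : Fin (k + 1) → ℕ) : Prop :=
    (∀ s, ustat T B P s = u s) ∧ ∀ i, hstat T B P i = b i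
  have hstats (P) : stats P.1 a ↔ stats (Ψ P).1 (a ∘ σ) := by
    simp only [stats, hΨ, Function.comp_apply]
    exact and_congr_right' σ.surjective.forall
  calc _ = Nat.card {P : {P // InPk T B P} // stats P.1 a} :=
        Nat.card_congr (Equiv.subtypeSubtypeEquivSubtypeInter _ (stats · a)).symm
    _ = Nat.card {P : {P // InPk T B P} // stats P.1 (a ∘ σ)} :=
        Nat.card_congr (Ψ.subtypeEquiv hstats)
    _ = _ := Nat.card_congr (Equiv.subtypeSubtypeEquivSubtypeInter _ (stats · (a ∘ σ)))
end

section
/- Assume y ≥ 2, T j = y for all j ∈ Fin x (the boundary T = N^y E^x), and B (x−1) < y (B ends with a north step). Then for all natural numbers i, j with i + j ≤ x, the number of P ∈ P(T,B) with t(P) = i and b(P) = j equals the number of weakly increasing maps h : Fin (x−i−j) → Fin (y−1) with h m ≥ B m for all m ∈ Fin (x−i−j) (lattice paths with north and east steps from (0,0) to (x−i−j, y−2) staying weakly above B). -/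
/-- The number of east steps of `P` shared with the path `Q` (contacts with `Q`). -/
noncomputable def ccount {x y : ℕ} (Q P : Fin x → Fin (y+1)) : ℕ :=
  Nat.card {j : Fin x // P j = Q j}

/-!
Deleting the bottom contacts of a path and lowering its other east steps by one turns the paths of
height at most `k` with `j` bottom contacts bijectively into the paths with `j` fewer east steps and
heights below `k`. The proof compares cardinalities: for paths with `n + 1` east steps, separating
those whose last step has the maximal height gives the same recurrence in `k` on both sides. It
starts at `k = B n`, where the last step is forced to be a contact. Since the upper boundary is
horizontal, the top contacts are the last steps of a path and can be cut off beforehand.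
-/

section FinTuples

variable {n : ℕ}

lemma monotone_snoc_iff {α : Type*} [Preorder α] {g : Fin n → α} {a : α} :
    Monotone (Fin.snoc g a : Fin (n + 1) → α) ↔ Monotone g ∧ ∀ m, g m ≤ a := by
  constructor
  · intro h
    exact ⟨fun l m hlm ↦ by simpa using h (Fin.castSucc_le_castSucc_iff.2 hlm),
      fun m ↦ by simpa using h (Fin.le_last m.castSucc)⟩
  · rintro ⟨hg, ha⟩ l m hlm
    induction m using Fin.lastCases with
    | last => induction l using Fin.lastCases <;> simp [ha]
    | cast m =>
      induction l using Fin.lastCases with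
      | last => exact absurd hlm (Fin.castSucc_lt_last m).not_ge
      | cast l => simpa using hg (Fin.castSucc_le_castSucc_iff.1 hlm)

lemma ncard_eq_ncard_last_ne_add_ncard_snoc {α : Type*} {S : Set (Fin (n + 1) → α)}
    (hS : S.Finite) (a : α) :
    S.ncard = {h ∈ S | h (Fin.last n) ≠ a}.ncard +
      {g : Fin n → α | (Fin.snoc g a : Fin (n + 1) → α) ∈ S}.ncard := by
  have snoc_injective : Function.Injective fun g : Fin n → α ↦ (Fin.snoc g a : Fin (n + 1) → α) :=
    fun g g' hgg' ↦ by simpa using congrArg Fin.init hgg'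
  have image_snoc : (fun g : Fin n → α ↦ (Fin.snoc g a : Fin (n + 1) → α)) ''
      {g | (Fin.snoc g a : Fin (n + 1) → α) ∈ S} = S \ {h ∈ S | h (Fin.last n) ≠ a} := by
    ext h
    constructor
    · rintro ⟨g, hg, rfl⟩
      exact ⟨hg, by simp⟩
    · rintro ⟨hh, hlast⟩
      obtain rfl : h (Fin.last n) = a := by simpa [hh] using hlast
      exact ⟨Fin.init h, by simpa using hh, Fin.snoc_init_self h⟩
  rw [← Set.ncard_image_of_injective _ snoc_injective, image_snoc,
    ← Set.ncard_sdiff_add_ncard_of_subset (Set.sep_subset S _) hS, Nat.add_comm]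

lemma card_subtype_val_comp_mem {N : ℕ} {S : Set (Fin n → ℕ)} (hS : ∀ h ∈ S, ∀ m, h m < N) :
    Nat.card {P : Fin n → Fin N // (fun m ↦ (P m : ℕ)) ∈ S} = S.ncard := by
  refine Set.ncard_preimage_of_injective_subset_range (Fin.val_injective.comp_left) fun h hh ↦ ?_
  exact ⟨fun m ↦ ⟨h m, hS h hh m⟩, rfl⟩

lemma exists_monotone_nat_extension {α : Type*} [SemilatticeSup α] [OrderBot α] {B : Fin n → α}
    (hB : Monotone B) : ∃ C : ℕ → α, Monotone C ∧ ∀ m : Fin n, C m = B m := by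
  refine ⟨fun l ↦ Finset.sup {m : Fin n | (m : ℕ) ≤ l} B, fun l l' hl ↦ ?_, fun m ↦ ?_⟩
  · exact Finset.sup_mono (Finset.monotone_filter_right _ fun m _ hm ↦ hm.trans hl)
  · exact le_antisymm (Finset.sup_le fun l hl ↦ hB (by simpa using hl)) (Finset.le_sup (by simp))

end FinTuples

section Paths

/-- The lattice paths with `n` east steps that stay weakly above `B` and strictly below height `K`,
as sequences of heights. The boundary is indexed by all of `ℕ`, so that one `B` serves for paths of
every length. -/
def boundedPaths (B : ℕ → ℕ) (K n : ℕ) : Set (Fin n → ℕ) :=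
  {h | Monotone h ∧ ∀ m : Fin n, B m ≤ h m ∧ h m < K}

/-- The number of east steps that the path `h` shares with the boundary `Q`; the counterpart of
`ccount` for heights in `ℕ`. -/
def contacts {n : ℕ} (Q : ℕ → ℕ) (h : Fin n → ℕ) : ℕ :=
  Finset.card {m : Fin n | h m = Q m}

/-- The paths of `boundedPaths B K n` with exactly `j` bottom contacts. -/
def contactPaths (B : ℕ → ℕ) (K n j : ℕ) : Set (Fin n → ℕ) :=
  {h ∈ boundedPaths B K n | contacts B h = j}

variable {B : ℕ → ℕ} {K k n i j : ℕ}

lemma finite_boundedPaths : (boundedPaths B K n).Finite :=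
  (Set.finite_Iic fun _ ↦ K).subset fun _ hh m ↦ (hh.2 m).2.le

lemma snoc_mem_boundedPaths_iff {g : Fin n → ℕ} {v : ℕ} :
    (Fin.snoc g v : Fin (n + 1) → ℕ) ∈ boundedPaths B K (n + 1) ↔
      g ∈ boundedPaths B (v + 1) n ∧ B n ≤ v ∧ v < K := by
  simp only [boundedPaths, Set.mem_ofPred_eq, monotone_snoc_iff, Fin.forall_fin_succ',
    Fin.snoc_castSucc, Fin.snoc_last, Fin.val_castSucc, Fin.val_last, Nat.lt_succ_iff]
  constructor
  · rintro ⟨⟨hg, hv⟩, hgB, hvB⟩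
    exact ⟨⟨hg, fun m ↦ ⟨(hgB m).1, hv m⟩⟩, hvB⟩
  · rintro ⟨⟨hg, hgB⟩, hvB⟩
    exact ⟨⟨hg, fun m ↦ (hgB m).2⟩, fun m ↦ ⟨(hgB m).1, (hgB m).2.trans_lt hvB.2⟩, hvB⟩

lemma mem_boundedPaths_and_last_ne_iff {h : Fin (n + 1) → ℕ} :
    h ∈ boundedPaths B (k + 1) (n + 1) ∧ h (Fin.last n) ≠ k ↔ h ∈ boundedPaths B k (n + 1) := by
  constructor
  · rintro ⟨⟨hmono, hB⟩, hne⟩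
    refine ⟨hmono, fun m ↦ ⟨(hB m).1, (hmono m.le_last).trans_lt ?_⟩⟩
    exact lt_of_le_of_ne (Nat.lt_succ_iff.1 (hB _).2) hne
  · rintro ⟨hmono, hB⟩
    exact ⟨⟨hmono, fun m ↦ ⟨(hB m).1, (hB m).2.trans k.lt_succ_self⟩⟩, (hB _).2.ne⟩

lemma boundedPaths_eq_empty (hK : K ≤ B n) : boundedPaths B K (n + 1) = ∅ :=
  Set.eq_empty_of_forall_notMem fun _ hh ↦
    ((hh.2 (Fin.last n)).1.trans_lt (hh.2 (Fin.last n)).2).not_ge hK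

lemma boundedPaths_zero : boundedPaths B K 0 = Set.univ :=
  Set.eq_univ_of_forall fun _ ↦ ⟨Subsingleton.monotone _, fun m ↦ m.elim0⟩

lemma contacts_snoc (Q : ℕ → ℕ) (g : Fin n → ℕ) (v : ℕ) :
    contacts Q (Fin.snoc g v : Fin (n + 1) → ℕ) = contacts Q g + if v = Q n then 1 else 0 := by
  simp only [contacts, Finset.card_filter, Fin.sum_univ_castSucc, Fin.snoc_castSucc,
    Fin.snoc_last, Fin.val_castSucc, Fin.val_last]

lemma contacts_le (Q : ℕ → ℕ) (h : Fin n → ℕ) : contacts Q h ≤ n :=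
  (Finset.card_le_univ _).trans_eq (Fintype.card_fin n)

lemma contacts_eq_zero_iff {Q : ℕ → ℕ} {h : Fin n → ℕ} :
    contacts Q h = 0 ↔ ∀ m : Fin n, h m ≠ Q m := by
  simp [contacts, Finset.filter_eq_empty_iff]

lemma ncard_boundedPaths_succ (hk : B n ≤ k) :
    (boundedPaths B (k + 1) (n + 1)).ncard =
      (boundedPaths B k (n + 1)).ncard + (boundedPaths B (k + 1) n).ncard := by
  rw [ncard_eq_ncard_last_ne_add_ncard_snoc finite_boundedPaths k]
  simp only [mem_boundedPaths_and_last_ne_iff, snoc_mem_boundedPaths_iff, hk, k.lt_succ_self,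
    and_true, Set.ofPred_mem_eq]

lemma finite_contactPaths : (contactPaths B K n j).Finite :=
  finite_boundedPaths.subset (Set.sep_subset _ _)

lemma contactPaths_eq_empty (hj : n < j) : contactPaths B K n j = ∅ :=
  Set.eq_empty_of_forall_notMem fun h hh ↦ (hh.2 ▸ contacts_le B h).not_gt hj

lemma ncard_contactPaths_succ (hk : B n < k) :
    (contactPaths B (k + 1) (n + 1) j).ncard =
      (contactPaths B k (n + 1) j).ncard + (contactPaths B (k + 1) n j).ncard := by
  rw [ncard_eq_ncard_last_ne_add_ncard_snoc finite_contactPaths k]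
  simp only [contactPaths, Set.mem_ofPred_eq, and_right_comm, mem_boundedPaths_and_last_ne_iff,
    snoc_mem_boundedPaths_iff, contacts_snoc, hk.ne', hk.le, k.lt_succ_self, if_false, add_zero,
    and_true]

lemma ncard_contactPaths_last_forced_succ :
    (contactPaths B (B n + 1) (n + 1) (j + 1)).ncard = (contactPaths B (B n + 1) n j).ncard := by
  rw [ncard_eq_ncard_last_ne_add_ncard_snoc finite_contactPaths (B n)]
  simp only [contactPaths, Set.mem_ofPred_eq, and_right_comm, mem_boundedPaths_and_last_ne_iff,
    boundedPaths_eq_empty le_rfl, snoc_mem_boundedPaths_iff, contacts_snoc, le_rfl,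
    (B n).lt_succ_self, if_true, add_left_inj, and_true, Set.mem_empty_iff_false, false_and,
    Set.ofPred_false, Set.ncard_empty, zero_add]

lemma contactPaths_last_forced_zero : contactPaths B (B n + 1) (n + 1) 0 = ∅ := by
  refine Set.eq_empty_of_forall_notMem fun h hh ↦ ?_
  have hlast := hh.1.2 (Fin.last n)
  exact contacts_eq_zero_iff.1 hh.2 (Fin.last n) (hlast.1.antisymm' (Nat.lt_succ_iff.1 hlast.2))

theorem ncard_contactPaths (hB : Monotone B) (hj : j ≤ n) (hk : ∀ m < n, B m ≤ k) :
    (contactPaths B (k + 1) n j).ncard = (boundedPaths B k (n - j)).ncard := by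
  induction n generalizing j k with
  | zero =>
    obtain rfl : j = 0 := Nat.le_zero.1 hj
    simp [contactPaths, boundedPaths_zero, contacts]
  | succ n ih_n =>
    induction k, hk n n.lt_succ_self using Nat.le_induction with
    | base =>
      have le_last : ∀ m < n, B m ≤ B n := fun m hm ↦ hB hm.le
      cases j with
      | zero => rw [contactPaths_last_forced_zero, Nat.sub_zero, boundedPaths_eq_empty le_rfl]
      | succ j =>
        rw [ncard_contactPaths_last_forced_succ, ih_n (Nat.le_of_succ_le_succ hj) le_last,
          Nat.add_sub_add_right]
    | succ k hnk ih_k =>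
      have hk' : ∀ m < n + 1, B m ≤ k := fun m hm ↦ (hB (Nat.le_of_lt_succ hm)).trans hnk
      rw [ncard_contactPaths_succ (Nat.lt_succ_of_le hnk), ih_k hk']
      obtain rfl | hjn := Nat.le_succ_iff_eq_or_le.1 hj
      · rw [contactPaths_eq_empty n.lt_succ_self, Nat.sub_self, boundedPaths_zero,
          boundedPaths_zero, Set.ncard_empty, add_zero]
      · rw [ih_n hjn fun m hm ↦ hk m (hm.trans n.lt_succ_self), Nat.succ_sub hjn,
          ncard_boundedPaths_succ ((hB (Nat.sub_le n j)).trans hnk)]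

lemma mem_boundedPaths_and_contacts_const_eq_zero_iff {h : Fin n → ℕ} :
    h ∈ boundedPaths B (k + 1) n ∧ contacts (fun _ ↦ k) h = 0 ↔ h ∈ boundedPaths B k n := by
  simp only [contacts_eq_zero_iff, boundedPaths, Set.mem_ofPred_eq, and_assoc, ← forall_and,
    Nat.lt_succ_iff, lt_iff_le_and_ne (b := k)]

lemma last_eq_of_contacts_const_ne_zero {h : Fin (n + 1) → ℕ}
    (hh : h ∈ boundedPaths B (k + 1) (n + 1)) (hk : contacts (fun _ ↦ k) h ≠ 0) :
    h (Fin.last n) = k := by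
  by_contra hlast
  exact hk (mem_boundedPaths_and_contacts_const_eq_zero_iff.2
    (mem_boundedPaths_and_last_ne_iff.1 ⟨hh, hlast⟩)).2

theorem ncard_contactPaths_topContacts (hB : ∀ m < n + i, B m < k) :
    {h ∈ contactPaths B (k + 1) (n + i) j | contacts (fun _ ↦ k) h = i}.ncard =
      (contactPaths B k n j).ncard := by
  induction i with
  | zero =>
    congr 1
    ext h
    exact and_right_comm.trans
      (and_congr_left' mem_boundedPaths_and_contacts_const_eq_zero_iff)
  | succ i ih =>
    have last_forced : {h ∈ {h ∈ contactPaths B (k + 1) (n + i + 1) j |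
        contacts (fun _ ↦ k) h = i + 1} | h (Fin.last (n + i)) ≠ k} = ∅ :=
      Set.eq_empty_of_forall_notMem fun h ⟨⟨hh, hi⟩, hlast⟩ ↦
        hlast (last_eq_of_contacts_const_ne_zero hh.1 (hi.trans_ne i.succ_ne_zero))
    have hBk : B (n + i) < k := hB _ (n + i).lt_succ_self
    rw [← ih fun m hm ↦ hB m (hm.trans (n + i).lt_succ_self), ← add_assoc,
      ncard_eq_ncard_last_ne_add_ncard_snoc (finite_contactPaths.subset (Set.sep_subset _ _)) k,
      last_forced, Set.ncard_empty, zero_add]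
    simp only [contactPaths, Set.mem_ofPred_eq, snoc_mem_boundedPaths_iff, contacts_snoc, hBk.ne',
      hBk.le, k.lt_succ_self, if_true, if_false, add_zero, add_left_inj, and_true]

end Paths

section Transfer

lemma val_comp_mem_boundedPaths_iff {n N : ℕ} {C : ℕ → ℕ} {P : Fin n → Fin N} :
    (fun m ↦ (P m : ℕ)) ∈ boundedPaths C N n ↔ Monotone P ∧ ∀ m : Fin n, C m ≤ P m := by
  simp only [boundedPaths, Set.mem_ofPred_eq, Fin.is_lt, and_true, Monotone, Fin.val_fin_le]

lemma inP_iff_val_comp_mem_boundedPaths {x y : ℕ} {T B P : Fin x → Fin (y + 1)} {C : ℕ → ℕ}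
    (hT : ∀ m, (T m : ℕ) = y) (hC : ∀ m : Fin x, C m = B m) :
    InP T B P ↔ (fun m ↦ (P m : ℕ)) ∈ boundedPaths C (y + 1) x := by
  simp only [InP, val_comp_mem_boundedPaths_iff, Fin.le_def, hT, hC, Fin.is_le, and_true]

lemma ccount_eq_contacts {x y : ℕ} {Q P : Fin x → Fin (y + 1)} {C : ℕ → ℕ}
    (hC : ∀ m : Fin x, C m = Q m) : ccount Q P = contacts C fun m ↦ (P m : ℕ) := by
  simp only [ccount, contacts, hC, Fin.val_inj, Nat.card_eq_fintype_card, Fintype.card_subtype]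

lemma card_monotone_ge_eq_ncard_boundedPaths {n N : ℕ} {C : ℕ → ℕ} :
    Nat.card {P : Fin n → Fin N // Monotone P ∧ ∀ m : Fin n, C m ≤ P m} =
      (boundedPaths C N n).ncard := by
  simp only [← val_comp_mem_boundedPaths_iff]
  exact card_subtype_val_comp_mem fun h hh m ↦ (hh.2 m).2

lemma card_inP_ccount_eq_ncard_contactPaths {x y i j : ℕ} {T B : Fin x → Fin (y + 1)} {C : ℕ → ℕ}
    (hT : ∀ m, (T m : ℕ) = y) (hC : ∀ m : Fin x, C m = B m) :
    Nat.card {P // InP T B P ∧ ccount T P = i ∧ ccount B P = j} =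
      {h ∈ contactPaths C (y + 1) x j | contacts (fun _ ↦ y) h = i}.ncard := by
  rw [← card_subtype_val_comp_mem fun h hh m ↦ (hh.1.1.2 m).2]
  refine Nat.card_congr (.subtypeEquivRight fun P ↦ ?_)
  rw [inP_iff_val_comp_mem_boundedPaths hT hC, ccount_eq_contacts hC,
    ccount_eq_contacts (C := fun _ ↦ y) fun m ↦ (hT m).symm]
  exact and_assoc.symm.trans and_right_comm

end Transfer

/-- If `T = N^y E^x` and `B` ends with a north step, the number of paths in
`P(T,B)` with `i` top and `j` bottom contacts equals the number of monotone
lattice paths from the origin to `(x-i-j, y-2)` staying weakly above `B`. -/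
theorem stmt10 {x y : ℕ} (hy : 2 ≤ y) (T B : Fin x → Fin (y+1))
    (hT : ∀ j, (T j : ℕ) = y) (hB : Monotone B)
    (hlast : ∀ j : Fin x, (j : ℕ) = x - 1 → (B j : ℕ) < y)
    (i j : ℕ) (hij : i + j ≤ x) :
    Nat.card {P : Fin x → Fin (y+1) // InP T B P ∧ ccount T P = i ∧ ccount B P = j}
    = Nat.card {h : Fin (x-i-j) → Fin (y-1) // Monotone h ∧
        ∀ m : Fin (x-i-j), (B ⟨(m : ℕ), by have := m.isLt; omega⟩ : ℕ) ≤ (h m : ℕ)} := by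
  obtain ⟨k, rfl⟩ : ∃ k, y = k + 1 := ⟨y - 1, by omega⟩
  obtain ⟨n, rfl⟩ : ∃ n, x = n + i := ⟨x - i, by omega⟩
  obtain ⟨C, hC, hCB⟩ : ∃ C : ℕ → ℕ, Monotone C ∧ ∀ m : Fin (n + i), C m = B m :=
    exists_monotone_nat_extension (Fin.val_strictMono.monotone.comp hB)
  have hBC (m : ℕ) (hm : m < n + i) : (B ⟨m, hm⟩ : ℕ) = C m := (hCB ⟨m, hm⟩).symm
  have hCk : ∀ m < n + i, C m < k + 1 := fun m hm ↦
    calc C m ≤ C (n + i - 1) := hC (by omega)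
      _ = B ⟨n + i - 1, by omega⟩ := (hBC _ _).symm
      _ < k + 1 := hlast _ rfl
  simp only [hBC]
  rw [card_inP_ccount_eq_ncard_contactPaths hT hCB, card_monotone_ge_eq_ncard_boundedPaths,
    ncard_contactPaths_topContacts hCk,
    ncard_contactPaths hC (by omega) fun m hm ↦ Nat.le_of_lt_succ (hCk m (by omega)),
    Nat.add_sub_cancel, Nat.add_sub_cancel]
end
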